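/- Let α and β₂ be real constants and define T₁ : (0,∞) → ℝ by T₁(z) = β₂ + α·z^{1/3}·(5 + 3z² + 2√(4+3z²))^{1/6}/(2 + √(4+3z²))^{2/3}. Then T₁ is differentiable on (0,∞) and satisfies (z + z√(4+3z²))·T₁′(z) − T₁(z) + β₂ = 0 for all z > 0; consequently T₁ satisfies the classical angular equation 3z²(1+z²)T₁′² + 2zT₁T₁′ − T₁² − 2β₂zT₁′ + 2β₂T₁ − β₂² = 0 on (0,∞). Moreover, every differentiable function T : (0,∞) → ℝ satisfying (z + z√(4+3z²))T′(z) − T(z) + β₂ = 0 for all z > 0 equals T₁ for some real α. -/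

import Mathlib

open Real in
/-- The particular solution `T₁` of the linear factor
`(z + z√(4+3z²))T′ − T + β₂ = 0` of the classical angular equation. -/
noncomputable def Tsol₁ (α β₂ z : ℝ) : ℝ :=
  β₂ + α * z ^ ((1 : ℝ) / 3) * (5 + 3 * z ^ 2 + 2 * sqrt (4 + 3 * z ^ 2)) ^ ((1 : ℝ) / 6)
    / (2 + sqrt (4 + 3 * z ^ 2)) ^ ((2 : ℝ) / 3)

/-!
Write `s = √(4 + 3z²)`. Since `5 + 3z² + 2s = (1 + s)²`, the solution is `T₁ = β₂ + α u^(1/3)` with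
`u = z(1 + s)/(2 + s)²`, and the choice of `u` makes `u′ = 3/(2 + s)²`, that is,
`z(1 + s) u′ = 3u`. Hence `u^(1/3)` solves the homogeneous equation `z(1 + s) h′ = h`, and any other
solution of it has zero Wronskian with `u^(1/3)`, so is a constant multiple of it. The classical
equation is, up to sign, the product of the linear one and its conjugate under `s ↦ -s`.
-/

theorem exists_eq_const_mul_of_wronskian_eq_zero {𝕜 : Type*} [RCLike 𝕜] {f g : 𝕜 → 𝕜} {U : Set 𝕜}
    (hU : IsOpen U) (hU' : IsPreconnected U)
    (hf : DifferentiableOn 𝕜 f U) (hg : DifferentiableOn 𝕜 g U) (hg₀ : ∀ x ∈ U, g x ≠ 0)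
    (hw : ∀ x ∈ U, deriv f x * g x - f x * deriv g x = 0) :
    ∃ c, ∀ x ∈ U, f x = c * g x := by
  have deriv_quotient : U.EqOn (deriv (f / g)) 0 := fun x hx ↦ by
    rw [deriv_div (hf.differentiableAt (hU.mem_nhds hx)) (hg.differentiableAt (hU.mem_nhds hx))
      (hg₀ x hx), hw x hx, zero_div, Pi.zero_apply]
  obtain ⟨c, hc⟩ := hU.exists_is_const_of_deriv_eq_zero hU' (hf.div hg hg₀) deriv_quotient
  exact ⟨c, fun x hx ↦ (div_eq_iff (hg₀ x hx)).mp (hc x hx)⟩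

theorem classical_angular_factorization {R : Type*} [CommRing R] {s z : R}
    (hs : s ^ 2 = 4 + 3 * z ^ 2) (β T D : R) :
    3 * z ^ 2 * (1 + z ^ 2) * D ^ 2 + 2 * z * T * D - T ^ 2 - 2 * β * z * D + 2 * β * T - β ^ 2
      = ((z + z * s) * D - T + β) * ((z * s - z) * D + T - β) := by
  linear_combination -z ^ 2 * D ^ 2 * hs

theorem sq_sqrt_four_add_three_mul_sq (z : ℝ) : √(4 + 3 * z ^ 2) ^ 2 = 4 + 3 * z ^ 2 :=
  Real.sq_sqrt (by positivity)

theorem hasDerivAt_sqrt_four_add_three_mul_sq (z : ℝ) :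
    HasDerivAt (fun x ↦ √(4 + 3 * x ^ 2)) (3 * z / √(4 + 3 * z ^ 2)) z := by
  have radicand : HasDerivAt (fun x : ℝ ↦ 4 + 3 * x ^ 2) (2 * (3 * z)) z :=
    (((hasDerivAt_pow 2 z).const_mul 3).const_add 4).congr_deriv (by ring)
  exact (radicand.sqrt (by positivity)).congr_deriv (mul_div_mul_left _ _ two_ne_zero)

/-- The cube `u = z(1 + s)/(2 + s)²`, `s = √(4 + 3z²)`, of the homogeneous solution. As
`3z² = s² - 4`, its logarithm is, up to a constant, the integral of
`3 dz/(z(1 + s)) = 3s ds/((s² - 4)(1 + s)) = (1/(2(s - 2)) - 3/(2(s + 2)) + 1/(s + 1)) ds`. -/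
noncomputable def homogeneousCube (z : ℝ) : ℝ :=
  z * (1 + √(4 + 3 * z ^ 2)) / (2 + √(4 + 3 * z ^ 2)) ^ 2

/-- The solution `u^(1/3)` of `(z + z√(4+3z²))h′ = h` on `(0,∞)`; a real power, so meaningful only
for `0 ≤ z`. -/
noncomputable def homogeneousSolution (z : ℝ) : ℝ :=
  homogeneousCube z ^ ((1 : ℝ) / 3)

theorem homogeneousCube_pos {z : ℝ} (hz : 0 < z) : 0 < homogeneousCube z := by
  unfold homogeneousCube
  positivity

theorem homogeneousSolution_pos {z : ℝ} (hz : 0 < z) : 0 < homogeneousSolution z :=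
  Real.rpow_pos_of_pos (homogeneousCube_pos hz) _

theorem hasDerivAt_homogeneousCube (z : ℝ) :
    HasDerivAt homogeneousCube (3 / (2 + √(4 + 3 * z ^ 2)) ^ 2) z := by
  have hs := hasDerivAt_sqrt_four_add_three_mul_sq z
  have quotient_rule := ((hasDerivAt_id z).mul (hs.const_add 1)).div ((hs.const_add 2).pow 2)
    (pow_ne_zero 2 (by positivity))
  refine quotient_rule.congr_deriv ?_
  have hsq := sq_sqrt_four_add_three_mul_sq z
  have hpos : 0 < √(4 + 3 * z ^ 2) := by positivity
  simp only [id_eq, Pi.mul_apply, Pi.pow_apply]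
  generalize √(4 + 3 * z ^ 2) = s at hsq hpos ⊢
  field_simp
  linear_combination (s ^ 2 + 2 * s) * hsq

theorem hasDerivAt_homogeneousSolution {z : ℝ} (hz : 0 < z) :
    HasDerivAt homogeneousSolution (homogeneousSolution z / (z + z * √(4 + 3 * z ^ 2))) z := by
  have hu := homogeneousCube_pos hz
  refine ((hasDerivAt_homogeneousCube z).rpow_const (Or.inl hu.ne')).congr_deriv ?_
  rw [Real.rpow_sub_one hu.ne', ← homogeneousSolution, homogeneousCube]
  field_simp

theorem Tsol₁_eq_add_mul_homogeneousSolution (α β₂ : ℝ) {z : ℝ} (hz : 0 ≤ z) :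
    Tsol₁ α β₂ z = β₂ + α * homogeneousSolution z := by
  have perfect_square : 5 + 3 * z ^ 2 + 2 * √(4 + 3 * z ^ 2) = (1 + √(4 + 3 * z ^ 2)) ^ 2 := by
    linear_combination -sq_sqrt_four_add_three_mul_sq z
  have sixth_root : ((1 + √(4 + 3 * z ^ 2)) ^ 2) ^ ((1 : ℝ) / 6)
      = (1 + √(4 + 3 * z ^ 2)) ^ ((1 : ℝ) / 3) := by
    rw [← Real.rpow_natCast_mul (by positivity)]
    norm_num
  have cube_root : ((2 + √(4 + 3 * z ^ 2)) ^ 2) ^ ((1 : ℝ) / 3)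
      = (2 + √(4 + 3 * z ^ 2)) ^ ((2 : ℝ) / 3) := by
    rw [← Real.rpow_natCast_mul (by positivity)]
    norm_num
  rw [Tsol₁, homogeneousSolution, homogeneousCube, Real.div_rpow (by positivity) (by positivity),
    Real.mul_rpow hz (by positivity), perfect_square, sixth_root, cube_root]
  ring

theorem hasDerivAt_Tsol₁ (α β₂ : ℝ) {z : ℝ} (hz : 0 < z) :
    HasDerivAt (Tsol₁ α β₂)
      (α * (homogeneousSolution z / (z + z * √(4 + 3 * z ^ 2)))) z := by
  refine (((hasDerivAt_homogeneousSolution hz).const_mul α).const_add β₂).congr_of_eventuallyEq ?_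
  filter_upwards [Ioi_mem_nhds hz] with x hx
  exact Tsol₁_eq_add_mul_homogeneousSolution α β₂ (le_of_lt hx)

theorem Tsol₁_linear_equation (α β₂ : ℝ) {z : ℝ} (hz : 0 < z) :
    (z + z * √(4 + 3 * z ^ 2)) * deriv (Tsol₁ α β₂) z - Tsol₁ α β₂ z + β₂ = 0 := by
  rw [(hasDerivAt_Tsol₁ α β₂ hz).deriv, Tsol₁_eq_add_mul_homogeneousSolution α β₂ hz.le]
  field_simp
  ring

theorem exists_eq_Tsol₁_of_linear_equation {T : ℝ → ℝ} {β₂ : ℝ} {U : Set ℝ} (hU : IsOpen U)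
    (hU' : IsPreconnected U) (hU₀ : U ⊆ Set.Ioi 0) (hT : DifferentiableOn ℝ T U)
    (hlin : ∀ z ∈ U, (z + z * √(4 + 3 * z ^ 2)) * deriv T z - T z + β₂ = 0) :
    ∃ α, ∀ z ∈ U, T z = Tsol₁ α β₂ z := by
  have wronskian : ∀ z ∈ U, deriv (fun x ↦ T x - β₂) z * homogeneousSolution z
      - (T z - β₂) * deriv homogeneousSolution z = 0 := fun z hz ↦ by
    have hz₀ : 0 < z := hU₀ hz
    have hT_sub : T z - β₂ = (z + z * √(4 + 3 * z ^ 2)) * deriv T z := by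
      linear_combination -hlin z hz
    rw [deriv_sub_const, (hasDerivAt_homogeneousSolution hz₀).deriv, hT_sub]
    field_simp
    ring
  obtain ⟨α, hα⟩ := exists_eq_const_mul_of_wronskian_eq_zero hU hU' (hT.sub_const β₂)
    (fun z hz ↦ (hasDerivAt_homogeneousSolution (hU₀ hz)).differentiableAt.differentiableWithinAt)
    (fun z hz ↦ (homogeneousSolution_pos (hU₀ hz)).ne') wronskian
  refine ⟨α, fun z hz ↦ ?_⟩
  rw [Tsol₁_eq_add_mul_homogeneousSolution α β₂ (hU₀ hz).le, ← hα z hz, add_sub_cancel]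

open Real in
/-- `T₁` is differentiable on `(0,∞)`, solves the first order linear equation
`(z + z√(4+3z²))T′ − T + β₂ = 0` there (hence also the classical angular
equation), and every differentiable solution of the linear equation on `(0,∞)`
is of this form. -/
theorem classical_angular_solution_one (α β₂ : ℝ) :
    DifferentiableOn ℝ (Tsol₁ α β₂) (Set.Ioi 0) ∧
    (∀ z ∈ Set.Ioi (0 : ℝ),
      (z + z * sqrt (4 + 3 * z ^ 2)) * deriv (Tsol₁ α β₂) z - Tsol₁ α β₂ z + β₂ = 0) ∧
    (∀ z ∈ Set.Ioi (0 : ℝ),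
      3 * z ^ 2 * (1 + z ^ 2) * (deriv (Tsol₁ α β₂) z) ^ 2
        + 2 * z * Tsol₁ α β₂ z * deriv (Tsol₁ α β₂) z - (Tsol₁ α β₂ z) ^ 2
        - 2 * β₂ * z * deriv (Tsol₁ α β₂) z + 2 * β₂ * Tsol₁ α β₂ z - β₂ ^ 2 = 0) ∧
    (∀ T : ℝ → ℝ, DifferentiableOn ℝ T (Set.Ioi 0) →
      (∀ z ∈ Set.Ioi (0 : ℝ),
        (z + z * sqrt (4 + 3 * z ^ 2)) * deriv T z - T z + β₂ = 0) →
      ∃ α' : ℝ, ∀ z ∈ Set.Ioi (0 : ℝ), T z = Tsol₁ α' β₂ z) := by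
  refine ⟨fun z hz ↦ (hasDerivAt_Tsol₁ α β₂ hz).differentiableAt.differentiableWithinAt,
    fun z hz ↦ Tsol₁_linear_equation α β₂ hz, fun z hz ↦ ?_,
    fun T hT hlin ↦ exists_eq_Tsol₁_of_linear_equation isOpen_Ioi isPreconnected_Ioi
      subset_rfl hT hlin⟩
  rw [classical_angular_factorization (sq_sqrt_four_add_three_mul_sq z),
    Tsol₁_linear_equation α β₂ hz, zero_mul]
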